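/- For an integer r, let m_max(r) denote the largest positive integer m for which there exists an integer polynomial nilpotent at r of index m. Then m_max(0) = 2; m_max(r) = 3 when |r| = 1; m_max(r) = 4 when |r| = 2; and m_max(r) = |r| when |r| ≥ 3. In particular, for every such r an integer polynomial nilpotent at r of index m_max(r) exists, and no integer polynomial nilpotent at r has larger index. -/

import Mathlib

/-!
Let `x n = u^{(n)}(r)`. Since `a - b ∣ u(a) - u(b)`, an orbit satisfies
`x i - x j ∣ x (i+1) - x (j+1)` for all `i`, `j` (`DiffDvd`).

*Upper bound, `r ≠ 0`.* The points `x 0, …, x m` are distinct. Write `d = x 1 - x 0`.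
Lemma `gap` shows `m * |d| ≤ |x m - x 0|`, unless the consecutive differences are `(d, -2d)`,
`(d, d, -3d)` or `(d, d, d, -5d)`. As `x m - x 0 = -r`, this gives `m ≤ |r|`, or `m ≤ 3`, or
`m = 4` and `r = 2d`; all are within the claimed bound.

The proof of `gap` is a strong induction on `m`. Each difference divides the next. Let `a` be the
length of the initial run of differences equal to `d`, and `q * d` the first different one. Then
`q ∉ {0, 1, -1}` by distinctness, and every `i` with `1 ≤ i ≤ a` divides `q - 1`, so `|q|` is large
compared with `a` (`run_bound`). The induction hypothesis applies to the orbit started at `x a`.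
If the tail satisfies the inequality, then `|x m - x 0| ≥ ((m - a) * |q| - a) * |d|`, which suffices
except for the three listed patterns. If the tail is one of the three patterns, the divisibility
of `x (a+2) - x a` by `x (a+1) - x (a-1)` leaves only a few values of `q` and `a`.

*Upper bound, `r = 0`.* If `m ≥ 3`, apply `gap` to the distinct points `x 1, …, x m`.
By periodicity all differences divide each other, which excludes the exceptional
patterns, and `|x m - x 1| = |x 1 - x 0|` is too small for the inequality.

*Existence.* For `|r| ≥ 3` translation by `±1` towards `0` works. For `|r| = 1, 2` a polynomial
is found by interpolating the patterns `(d, d, -3d)` and `(d, d, d, -5d)`; for `r = 0` take `1 - X`.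
-/

open Polynomial

/-- `polyIter u n r` is the `n`-fold iterate `u^{(n)}(r)` of the integer polynomial `u` at `r`. -/
def polyIter (u : Polynomial ℤ) (n : ℕ) (r : ℤ) : ℤ := (fun x => u.eval x)^[n] r

/-- `u` is nilpotent at `r` of index `m`: `m` is the least positive integer with `u^{(m)}(r) = 0`. -/
def NilpotentAt (u : Polynomial ℤ) (r : ℤ) (m : ℕ) : Prop :=
  0 < m ∧ polyIter u m r = 0 ∧ ∀ n : ℕ, 0 < n → n < m → polyIter u n r ≠ 0
/-- The claimed maximal nilpotency index at `r`. -/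
def mMax (r : ℤ) : ℕ :=
  if r = 0 then 2
  else if r.natAbs = 1 then 3
  else if r.natAbs = 2 then 4
  else r.natAbs

/-! ### Divisibility sequences of differences -/

/-- The divisibility property of orbits of integer polynomials. -/
def DiffDvd (x : ℕ → ℤ) : Prop := ∀ i j, x i - x j ∣ x (i + 1) - x (j + 1)

/-- If `1, …, a` all divide `q - 1 ≠ 0`, then `|q|` is large, up to exceptions with `a ≤ 3`. For `a ≥ 4` the
coprime divisors `a` and `a - 1` suffice. -/
lemma run_bound (a : ℕ) (q : ℤ) (ha : 1 ≤ a) (h0 : q ≠ 0) (h1 : q ≠ 1) (h2 : q ≠ -1)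
    (h : ∀ i : ℕ, 1 ≤ i → i ≤ a → (i : ℤ) ∣ q - 1) :
    2 * (a : ℤ) + 1 ≤ |q| ∨ (a = 1 ∧ (q = 2 ∨ q = -2)) ∨ (a = 2 ∧ (q = 3 ∨ q = -3)) ∨
      (a = 3 ∧ q = -5) := by
  rcases Nat.lt_or_ge a 4 with h4 | h4
  · have e1 : 2 ≤ a → (2 : ℤ) ∣ q - 1 := fun h' => by simpa using h 2 (by omega) h'
    have e2 : 3 ≤ a → (3 : ℤ) ∣ q - 1 := fun h' => by simpa using h 3 (by omega) h'
    rcases abs_cases q with ⟨h', _⟩ | ⟨h', _⟩ <;> rw [h'] <;> interval_cases a <;>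
      simp at e1 e2 ⊢ <;> omega
  · left
    obtain ⟨c, rfl⟩ : ∃ c, a = c + 1 := ⟨a - 1, by omega⟩
    have hc : IsCoprime (((c + 1 : ℕ)) : ℤ) (c : ℤ) := ⟨1, -1, by push_cast; ring⟩
    have hd := hc.mul_dvd (h (c + 1) (by omega) le_rfl) (h c (by omega) (by omega))
    have hle := Int.le_of_dvd (abs_pos.mpr (sub_ne_zero.mpr h1)) ((dvd_abs _ _).mpr hd)
    have h3 : |q - 1| ≤ |q| + 1 := by simpa using abs_sub q 1
    have h5 : (3 : ℤ) ≤ c := by exact_mod_cast (by omega : 3 ≤ c)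
    push_cast at hle ⊢
    nlinarith

/-- If the points `x 0, …, x m` of an orbit are distinct, then `x m` is at distance at least
`m * |x 1 - x 0|` from `x 0`, up to three exceptional patterns of differences. -/
theorem gap (m : ℕ) : ∀ x : ℕ → ℤ, DiffDvd x → (∀ i ≤ m, ∀ j ≤ m, x i = x j → i = j) →
    (m : ℤ) * |x 1 - x 0| ≤ |x m - x 0| ∨
    (m = 2 ∧ x 2 - x 1 = -2 * (x 1 - x 0)) ∨
    (m = 3 ∧ x 2 - x 1 = x 1 - x 0 ∧ x 3 - x 2 = -3 * (x 1 - x 0)) ∨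
    (m = 4 ∧ x 2 - x 1 = x 1 - x 0 ∧ x 3 - x 2 = x 1 - x 0 ∧ x 4 - x 3 = -5 * (x 1 - x 0)) := by
  induction m using Nat.strong_induction_on with
  | _ m ih =>
  intro x hx hinj
  by_cases hall : ∀ i < m, x (i + 1) - x i = x 1 - x 0
  · left
    have key : ∀ i ≤ m, x i - x 0 = i * (x 1 - x 0) := by
      intro i
      induction i with
      | zero => simp
      | succ k ihk =>
        intro hk
        have := ihk (by omega)
        have := hall k (by omega)
        push_cast
        linarith
    rw [key m le_rfl, abs_mul, Nat.abs_cast]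
  · -- `a` is the length of the initial run of equal differences
    have hex : ∃ i, i < m ∧ x (i + 1) - x i ≠ x 1 - x 0 := by push Not at hall; exact hall
    classical
    obtain ⟨a, ⟨ham, hane⟩, hmin⟩ : ∃ a, (a < m ∧ x (a + 1) - x a ≠ x 1 - x 0) ∧
        ∀ i < a, x (i + 1) - x i = x 1 - x 0 :=
      ⟨Nat.find hex, Nat.find_spec hex, fun i hi => by
        have h1 := Nat.find_min hex hi
        have h2 := (Nat.find_spec hex).1
        by_contra h3
        exact h1 ⟨by omega, h3⟩⟩
    have ha1 : 1 ≤ a := by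
      rcases Nat.eq_zero_or_pos a with rfl | h
      · simp at hane
      · exact h
    obtain ⟨d, hd⟩ : ∃ d, d = x 1 - x 0 := ⟨_, rfl⟩
    have hd0 : d ≠ 0 := by
      intro h
      have := hinj 1 (by omega) 0 (by omega) (by linarith)
      omega
    rw [← hd] at hane hmin ⊢
    have hrun : ∀ i ≤ a, x i = x 0 + i * d := by
      intro i
      induction i with
      | zero => simp
      | succ k ihk =>
        intro hk
        have := ihk (by omega)
        have := hmin k (by omega)
        push_cast
        linarith
    have hstep : d ∣ x (a + 1) - x a := by
      obtain ⟨c, rfl⟩ : ∃ c, a = c + 1 := ⟨a - 1, by omega⟩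
      have := hx (c + 1) c
      rwa [hmin c (by omega)] at this
    obtain ⟨q, hq⟩ := hstep
    have hxa := hrun a le_rfl
    have hxa1 : x (a + 1) = x 0 + (a + q) * d := by linarith
    have q1 : q ≠ 1 := by rintro rfl; apply hane; linarith
    have q0 : q ≠ 0 := by
      rintro rfl
      have := hinj (a + 1) (by omega) a (by omega) (by linarith)
      omega
    have hpred : x (a - 1) = x 0 + (a - 1) * d := by
      have := hrun (a - 1) (by omega)
      rwa [Nat.cast_sub ha1, Nat.cast_one] at this
    have qm1 : q ≠ -1 := by
      rintro rfl
      have := hinj (a + 1) (by omega) (a - 1) (by omega) (by linarith)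
      omega
    have hdv : ∀ i : ℕ, 1 ≤ i → i ≤ a → (i : ℤ) ∣ q - 1 := by
      intro i hi hia
      have h1 := hx a (a - i)
      have h2 := hrun (a - i) (by omega)
      have h3 := hrun (a - i + 1) (by omega)
      rw [h3, hxa1, hxa, h2] at h1
      push_cast [Nat.cast_sub hia] at h1
      have h4 : (i : ℤ) * d ∣ (i + (q - 1)) * d := by convert h1 using 1 <;> ring
      have h5 := Int.dvd_of_mul_dvd_mul_right hd0 h4
      exact (dvd_add_right (dvd_refl _)).mp h5
    -- divisibility of `x (a+2) - x a` by `x (a+1) - x (a-1)`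
    have hs : ∀ s : ℤ, x (a + 2) - x (a + 1) = s * (q * d) → q + 1 ∣ s + 1 := by
      intro s h
      have h1 := hx (a + 1) (a - 1)
      rw [Nat.sub_add_cancel ha1] at h1
      have h2 : (q + 1) * d ∣ (q * (s + 1)) * d := by
        convert h1 using 1
        · rw [hxa1, hpred]; ring
        · linarith
      have h3 := Int.dvd_of_mul_dvd_mul_right hd0 h2
      have h4 : IsCoprime (q + 1) q := ⟨1, -1, by ring⟩
      exact h4.dvd_of_dvd_mul_left h3
    have h2a : 2 ≤ a → (2 : ℤ) ∣ q - 1 := fun hle => by simpa using hdv 2 (by omega) hle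
    have h3a : 3 ≤ a → (3 : ℤ) ∣ q - 1 := fun hle => by simpa using hdv 3 (by omega) hle
    -- to bound `|x m - x 0|` it suffices to bound its quotient by `d`
    have fin : ∀ t : ℤ, x m - x 0 = t * d → (m : ℤ) ≤ |t| → (m : ℤ) * |d| ≤ |x m - x 0| := by
      intro t ht hmt
      rw [ht, abs_mul]
      exact mul_le_mul_of_nonneg_right hmt (abs_nonneg _)
    obtain ⟨b, rfl⟩ : ∃ b, m = a + b := ⟨m - a, by omega⟩
    have hb : 1 ≤ b := by omega
    have hxs : DiffDvd fun n => x (a + n) := fun i j => hx (a + i) (a + j)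
    have IH := ih b (by omega) (fun n => x (a + n)) hxs (fun i hi j hj h => by
      have := hinj (a + i) (by omega) (a + j) (by omega) h
      omega)
    simp only [add_zero] at IH
    rw [hq, mul_comm d q] at IH
    rcases IH with h | ⟨rfl, h⟩ | ⟨rfl, h, h'⟩ | ⟨rfl, h, h', h''⟩
    · have rb := run_bound a q ha1 q0 q1 qm1 hdv
      rcases Nat.lt_or_ge b 2 with hb2 | hb2
      · obtain rfl : b = 1 := by omega
        have hD : x (a + 1) - x 0 = (a + q) * d := by linarith
        rcases rb with h | ⟨rfl, rfl | rfl⟩ | ⟨rfl, rfl | rfl⟩ | ⟨rfl, rfl⟩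
        · left
          refine fin _ hD ?_
          push_cast
          rcases abs_cases q with ⟨e, _⟩ | ⟨e, _⟩ <;>
            rcases abs_cases ((a : ℤ) + q) with ⟨e', _⟩ | ⟨e', _⟩ <;> omega
        · left; exact fin _ hD (by norm_num)
        · right; left
          exact ⟨rfl, by simpa [mul_comm] using hq⟩
        · left; exact fin _ hD (by norm_num)
        · right; right; left
          exact ⟨rfl, hmin 1 (by norm_num), by simpa [mul_comm] using hq⟩
        · right; right; right
          exact ⟨rfl, hmin 1 (by norm_num), hmin 2 (by norm_num), by simpa [mul_comm] using hq⟩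
      · left
        have hqa : (a : ℤ) + 1 ≤ |q| := by
          rcases rb with h | ⟨rfl, rfl | rfl⟩ | ⟨rfl, rfl | rfl⟩ | ⟨rfl, rfl⟩
          · have : (0 : ℤ) ≤ a := Nat.cast_nonneg a
            linarith
          all_goals norm_num
        have hab : |x (a + b) - x a| ≤ |x (a + b) - x 0| + a * |d| := by
          have e : x (a + b) - x a = (x (a + b) - x 0) - a * d := by rw [hxa]; ring
          rw [e]
          refine (abs_sub _ _).trans ?_
          rw [abs_mul, Nat.abs_cast]
        have hb2' : (2 : ℤ) ≤ b := by exact_mod_cast hb2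
        have ha0 : (1 : ℤ) ≤ a := by exact_mod_cast ha1
        have hmain : (2 * (a : ℤ) + b) ≤ b * |q| := by nlinarith
        have := mul_le_mul_of_nonneg_right hmain (abs_nonneg d)
        rw [abs_mul] at h
        push_cast
        nlinarith
    · left
      have h1 := Int.isUnit_iff.mp (isUnit_of_dvd_one ((dvd_neg).mp (by simpa using hs (-2) h)))
      obtain rfl : q = -2 := by omega
      obtain rfl : a = 1 := by
        by_contra hne
        have := h2a (by omega)
        omega
      refine fin 3 ?_ (by norm_num)
      norm_num at *
      linarith
    · left
      have h1 : q + 1 ∣ 2 := by simpa using hs 1 (by linarith)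
      have h2 := Int.le_of_dvd (by norm_num) h1
      have h3 := Int.le_of_dvd (by norm_num) (neg_dvd.mpr h1)
      have hqq : q = -2 ∨ q = -3 := by omega
      have haa : a = 1 ∨ a = 2 := by
        by_contra hne
        have := h2a (by omega)
        have := h3a (by omega)
        omega
      have hD : x (a + 3) - x 0 = (a - q) * d := by linarith
      rcases hqq with rfl | rfl
      · rcases haa with rfl | rfl
        · -- the differences `(d, -2d, -2d, 6d)` violate `x 3 - x 0 ∣ x 4 - x 1`
          exfalso
          have e := hx 3 0
          norm_num at *
          have e1 : x 3 - x 0 = (-3) * d := by linarith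
          have e2 : x 4 - x 1 = 2 * d := by linarith
          rw [e1, e2] at e
          have := Int.dvd_of_mul_dvd_mul_right hd0 e
          norm_num at this
        · have := h2a le_rfl
          omega
      · rcases haa with rfl | rfl <;> exact fin _ hD (by norm_num)
    · left
      have h1 : q + 1 ∣ 2 := by simpa using hs 1 (by linarith)
      have h2 := Int.le_of_dvd (by norm_num) h1
      have h3 := Int.le_of_dvd (by norm_num) (neg_dvd.mpr h1)
      have hqq : q = -2 ∨ q = -3 := by omega
      have haa : a = 1 ∨ a = 2 := by
        by_contra hne
        have := h2a (by omega)
        have := h3a (by omega)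
        omega
      have hD : x (a + 4) - x 0 = (a - 2 * q) * d := by linarith
      rcases hqq with rfl | rfl <;> rcases haa with rfl | rfl <;> exact fin _ hD (by norm_num)

/-! ### Orbits of integer polynomials -/

lemma polyIter_succ (u : Polynomial ℤ) (n : ℕ) (r : ℤ) :
    polyIter u (n + 1) r = u.eval (polyIter u n r) :=
  Function.iterate_succ_apply' _ _ _

lemma polyIter_diffDvd (u : Polynomial ℤ) (r : ℤ) : DiffDvd fun n => polyIter u n r := by
  intro i j
  simp only [polyIter_succ]
  exact Polynomial.sub_dvd_eval_sub _ _ _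

lemma polyIter_shift (u : Polynomial ℤ) (r : ℤ) (i j k : ℕ)
    (h : polyIter u i r = polyIter u j r) : polyIter u (i + k) r = polyIter u (j + k) r := by
  induction k with
  | zero => simpa using h
  | succ k ih => rw [← add_assoc, ← add_assoc, polyIter_succ, polyIter_succ, ih]

/-- Up to the index of nilpotency, iterates of positive index are distinct. The starting point `r`
may be repeated only as the final value `0`. -/
lemma polyIter_inj {u : Polynomial ℤ} {r : ℤ} {m : ℕ} (h : NilpotentAt u r m) {i j : ℕ}
    (hj : j ≤ m) (hij : i < j) (hr : r ≠ 0 ∨ 0 < i) : polyIter u i r ≠ polyIter u j r := by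
  intro he
  have h1 := polyIter_shift u r i j (m - j) he
  rw [Nat.add_sub_cancel' hj, h.2.1] at h1
  rcases Nat.eq_zero_or_pos (i + (m - j)) with h0 | h0
  · rw [h0] at h1
    rcases hr with hr | hr
    · exact hr h1
    · omega
  · exact h.2.2 _ h0 (by omega) h1

/-! ### Upper bounds for the index -/

lemma upper_zero (u : Polynomial ℤ) (m : ℕ) (h : NilpotentAt u 0 m) : m ≤ 2 := by
  by_contra! hm
  obtain ⟨k, rfl⟩ : ∃ k, m = k + 1 := ⟨m - 1, by omega⟩
  obtain ⟨x, hxdef⟩ : ∃ x : ℕ → ℤ, x = fun n => polyIter u n 0 := ⟨_, rfl⟩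
  have hx : DiffDvd x := hxdef ▸ polyIter_diffDvd u 0
  have hx0 : x 0 = 0 := by rw [hxdef]; rfl
  have hxm : x (k + 1) = 0 := by rw [hxdef]; exact h.2.1
  have hxm1 : x (k + 1 + 1) = x 1 := by
    have := polyIter_shift u 0 (k + 1) 0 1 h.2.1
    rw [hxdef]; simpa using this
  have hne : ∀ i j, 0 < i → i < j → j ≤ k + 1 → x i ≠ x j := by
    intro i j hi hij hj
    rw [hxdef]
    exact polyIter_inj h hj hij (Or.inr hi)
  have hd01 : x 1 - x 0 ∣ x 2 - x 1 := hx 1 0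
  have hlast : x (k + 1) - x k ∣ x 1 - x 0 := by
    have := hx (k + 1) k
    have e : x 1 - x (k + 1) = x 1 - x 0 := by rw [hxm, hx0]
    rwa [hxm1, e] at this
  have hd1 : x 2 - x 1 ≠ 0 := sub_ne_zero.mpr (hne 1 2 (by omega) (by omega) (by omega)).symm
  have hchain := hlast.trans hd01
  -- the last difference divides the second one, so it is not a proper multiple of it
  have hexc : ∀ c : ℤ, c * (x 2 - x 1) ∣ x 2 - x 1 → c = 1 ∨ c = -1 := by
    intro c hc
    have h1 : c * (x 2 - x 1) ∣ 1 * (x 2 - x 1) := by simpa using hc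
    exact Int.isUnit_iff.mp (isUnit_of_dvd_one (Int.dvd_of_mul_dvd_mul_right hd1 h1))
  have G := gap k (fun n => x (n + 1)) (fun i j => hx (i + 1) (j + 1)) (fun i hi j hj he => by
    by_contra hne'
    rcases Nat.lt_or_gt_of_ne hne' with hl | hl
    · exact hne (i + 1) (j + 1) (by omega) (by omega) (by omega) he
    · exact hne (j + 1) (i + 1) (by omega) (by omega) (by omega) he.symm)
  norm_num at G
  rcases G with h1 | ⟨rfl, h1⟩ | ⟨rfl, -, h1⟩ | ⟨rfl, -, -, h1⟩
  · have h2 := Int.le_of_dvd (abs_pos.mpr hd1) ((abs_dvd_abs _ _).mpr hd01)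
    rw [hxm, ← hx0, abs_sub_comm (x 0)] at h1
    have h3 : (2 : ℤ) ≤ k := by exact_mod_cast (by omega : 2 ≤ k)
    have h4 := abs_pos.mpr hd1
    nlinarith
  all_goals
    norm_num at hchain h1
    have h2 := hchain
    rw [h1] at h2
  · have := hexc (-2) (by simpa using h2)
    omega
  · have := hexc (-3) (by simpa using h2)
    omega
  · have := hexc (-5) (by simpa using h2)
    omega

lemma upper_ne_zero (u : Polynomial ℤ) (r : ℤ) (hr : r ≠ 0) (m : ℕ) (h : NilpotentAt u r m) :
    m ≤ mMax r := by
  have hm : r.natAbs ≤ mMax r ∧ 3 ≤ mMax r ∧ (r.natAbs = 2 → 4 ≤ mMax r) := by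
    unfold mMax
    split_ifs <;> omega
  have hne : ∀ i j, i < j → j ≤ m → polyIter u i r ≠ polyIter u j r :=
    fun i j hij hj => polyIter_inj h hj hij (Or.inl hr)
  have h01 := hne 0 1 (by omega) h.1
  have G := gap m (fun n => polyIter u n r) (polyIter_diffDvd u r) (fun i hi j hj he => by
    by_contra hne'
    rcases Nat.lt_or_gt_of_ne hne' with hl | hl
    · exact hne i j hl hj he
    · exact hne j i hl hi he.symm)
  have hx0 : polyIter u 0 r = r := rfl
  have hxm := h.2.1
  simp only [hx0] at G h01
  rcases G with h1 | ⟨rfl, h1⟩ | ⟨rfl, -, h1⟩ | ⟨rfl, h1, h2, h3⟩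
  · rw [hxm, zero_sub, abs_neg] at h1
    have h2 : 0 < |polyIter u 1 r - r| := abs_pos.mpr (sub_ne_zero.mpr h01.symm)
    have h3 : (m : ℤ) ≤ |r| := by nlinarith [(Nat.cast_nonneg m : (0 : ℤ) ≤ m)]
    rw [Int.abs_eq_natAbs] at h3
    omega
  · omega
  · omega
  · omega

/-! ### Polynomials attaining the bound -/

lemma polyIter_X_add_C (c r : ℤ) (n : ℕ) : polyIter (X + C c) n r = r + n * c := by
  induction n with
  | zero => simp [polyIter]
  | succ n ih => rw [polyIter_succ, ih]; simp; ring

lemma exists_nilpotent (r : ℤ) : ∃ u : Polynomial ℤ, NilpotentAt u r (mMax r) := by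
  by_cases h3 : 3 ≤ r.natAbs
  · have hm : mMax r = r.natAbs := by unfold mMax; split_ifs <;> omega
    rw [hm]
    rcases le_total 0 r with hr | hr
    · refine ⟨X + C (-1), by omega, ?_, fun n hn hn' => ?_⟩ <;> rw [polyIter_X_add_C] <;> omega
    · refine ⟨X + C 1, by omega, ?_, fun n hn hn' => ?_⟩ <;> rw [polyIter_X_add_C] <;> omega
  · have hr : r = 0 ∨ r = 1 ∨ r = -1 ∨ r = 2 ∨ r = -2 := by omega
    rcases hr with rfl | rfl | rfl | rfl | rfl
    -- orbit `0, 1, 0`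
    · refine ⟨1 - X, ?_⟩
      refine ⟨by norm_num [mMax], by norm_num [mMax, polyIter], fun n hn hn' => ?_⟩
      norm_num [mMax] at hn'
      interval_cases n <;> norm_num [polyIter]
    -- orbit `1, 2, 3, 0`
    · refine ⟨X + 1 - 2 * (X - 1) * (X - 2), ?_⟩
      refine ⟨by norm_num [mMax], by norm_num [mMax, polyIter], fun n hn hn' => ?_⟩
      norm_num [mMax] at hn'
      interval_cases n <;> norm_num [polyIter]
    · refine ⟨X - 1 + 2 * (X + 1) * (X + 2), ?_⟩
      refine ⟨by norm_num [mMax], by norm_num [mMax, polyIter], fun n hn hn' => ?_⟩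
      norm_num [mMax] at hn'
      interval_cases n <;> norm_num [polyIter]
    -- orbit `2, 3, 4, 5, 0`
    · refine ⟨X + 1 - (X - 2) * (X - 3) * (X - 4), ?_⟩
      refine ⟨by norm_num [mMax], by norm_num [mMax, polyIter], fun n hn hn' => ?_⟩
      norm_num [mMax] at hn'
      interval_cases n <;> norm_num [polyIter]
    · refine ⟨X - 1 - (X + 2) * (X + 3) * (X + 4), ?_⟩
      refine ⟨by norm_num [mMax], by norm_num [mMax, polyIter], fun n hn hn' => ?_⟩
      norm_num [mMax] at hn'
      interval_cases n <;> norm_num [polyIter]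

theorem stmt_17 (r : ℤ) :
    (∃ u : Polynomial ℤ, NilpotentAt u r (mMax r)) ∧
      ∀ (u : Polynomial ℤ) (m : ℕ), NilpotentAt u r m → m ≤ mMax r := by
  refine ⟨exists_nilpotent r, fun u m h => ?_⟩
  by_cases hr : r = 0
  · subst hr
    simpa [mMax] using upper_zero u m h
  · exact upper_ne_zero u r hr m h
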